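/- For all w^A, w^B ∈ ℝᵈ, the expected TD update satisfies ‖ḡ(w^A) − ḡ(w^B)‖₂ ≤ 2L·√(Σ_s D(s)·(z_{w^A}(s) − z_{w^B}(s))²). -/

import Mathlib

open scoped RealInnerProductSpace BigOperators
open Finset

/-- The per-sample TD update
`g(w; s, s') := (f(r(s,s') + γ⟨x(s'), w⟩) − f(⟨x(s), w⟩)) • x(s)`. -/
noncomputable def tdSample {S : Type*} {d : ℕ} (x : S → EuclideanSpace ℝ (Fin d))
    (r : S → S → ℝ) (γ : ℝ) (f : ℝ → ℝ) (w : EuclideanSpace ℝ (Fin d)) (s s' : S) :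
    EuclideanSpace ℝ (Fin d) :=
  (f (r s s' + γ * ⟪x s', w⟫) - f ⟪x s, w⟫) • x s

/-- The expected TD update `ḡ(w) := Σ_{s,s'} D(s) P(s,s') g(w; s, s')`. -/
noncomputable def tdExpected {S : Type*} [Fintype S] {d : ℕ} (D : S → ℝ) (P : S → S → ℝ)
    (x : S → EuclideanSpace ℝ (Fin d)) (r : S → S → ℝ) (γ : ℝ) (f : ℝ → ℝ)
    (w : EuclideanSpace ℝ (Fin d)) : EuclideanSpace ℝ (Fin d) :=
  ∑ s, ∑ s', (D s * P s s') • tdSample x r γ f w s s'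

/-!
A parameter change alters a sampled update by at most `K (|γ| |Δz(s')| + |Δz(s)|)`, where `Δz` is
the change in predictions and `K` is a Lipschitz constant of `f`. Averaging over transitions, `s`
has law `D` and, by stationarity, so does `s'`; both terms become the same `D`-mean of `|Δz|`, which
Jensen's inequality bounds by the root mean square.
-/

open scoped NNReal

lemma sum_mul_le_sqrt_sum_mul_sq {ι : Type*} (t : Finset ι) (p u : ι → ℝ)
    (hp : ∀ i ∈ t, 0 ≤ p i) (hp1 : ∑ i ∈ t, p i = 1) :
    ∑ i ∈ t, p i * u i ≤ √(∑ i ∈ t, p i * u i ^ 2) :=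
  Real.le_sqrt_of_sq_le (Real.pow_arith_mean_le_arith_mean_pow_of_even t p u hp hp1 even_two)

section Marginals

variable {S T R : Type*} [Fintype S] [Fintype T]

lemma sum_sum_mul_fst_of_sum_eq_one [NonAssocSemiring R] (D : S → R) {P : S → T → R}
    (hP1 : ∀ s, ∑ t, P s t = 1) (v : S → R) :
    ∑ s, ∑ t, D s * P s t * v s = ∑ s, D s * v s := by
  simp only [← sum_mul, ← mul_sum, hP1, mul_one]

lemma sum_sum_mul_snd_of_sum_eq [NonUnitalNonAssocSemiring R] {D : S → R} {P : S → T → R}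
    {D' : T → R} (hD' : ∀ t, ∑ s, D s * P s t = D' t) (v : T → R) :
    ∑ s, ∑ t, D s * P s t * v t = ∑ t, D' t * v t := by
  rw [sum_comm]
  simp only [← sum_mul, hD']

end Marginals

section TemporalDifference

variable {S : Type*} {d : ℕ} {x : S → EuclideanSpace ℝ (Fin d)} {f : ℝ → ℝ} {K : ℝ≥0}

lemma norm_tdSample_sub_le (hf : LipschitzWith K f) (r : S → S → ℝ) (γ : ℝ)
    (wA wB : EuclideanSpace ℝ (Fin d)) (s s' : S) :
    ‖tdSample x r γ f wA s s' - tdSample x r γ f wB s s'‖ ≤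
      K * (|γ| * |⟪x s', wA⟫ - ⟪x s', wB⟫| + |⟪x s, wA⟫ - ⟪x s, wB⟫|) * ‖x s‖ := by
  have lipschitz (a b : ℝ) : |f a - f b| ≤ K * |a - b| := hf.dist_le_mul a b
  have target_le : |f (r s s' + γ * ⟪x s', wA⟫) - f (r s s' + γ * ⟪x s', wB⟫)| ≤
      K * (|γ| * |⟪x s', wA⟫ - ⟪x s', wB⟫|) := by
    simpa only [add_sub_add_left_eq_sub, ← mul_sub, abs_mul] using
      lipschitz (r s s' + γ * ⟪x s', wA⟫) (r s s' + γ * ⟪x s', wB⟫)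
  rw [tdSample, tdSample, ← sub_smul, norm_smul, Real.norm_eq_abs, sub_sub_sub_comm, mul_add]
  gcongr
  exact (abs_sub _ _).trans (add_le_add target_le (lipschitz _ _))

variable [Fintype S] {D : S → ℝ} {P : S → S → ℝ}

lemma norm_tdExpected_sub_le_sum_norm (hD : ∀ s, 0 ≤ D s) (hP : ∀ s s', 0 ≤ P s s')
    (r : S → S → ℝ) (γ : ℝ) (f : ℝ → ℝ) (wA wB : EuclideanSpace ℝ (Fin d)) :
    ‖tdExpected D P x r γ f wA - tdExpected D P x r γ f wB‖ ≤
      ∑ s, ∑ s', D s * P s s' * ‖tdSample x r γ f wA s s' - tdSample x r γ f wB s s'‖ := by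
  simp only [tdExpected, ← sum_sub_distrib, ← smul_sub]
  refine norm_sum_le_of_le _ fun s _ ↦ norm_sum_le_of_le _ fun s' _ ↦ ?_
  rw [norm_smul, Real.norm_of_nonneg (mul_nonneg (hD s) (hP s s'))]

lemma norm_tdExpected_sub_le (hD : ∀ s, 0 ≤ D s) (hP : ∀ s s', 0 ≤ P s s')
    (hP1 : ∀ s, ∑ s', P s s' = 1) (hstat : ∀ s', ∑ s, D s * P s s' = D s')
    (hx : ∀ s, ‖x s‖ ≤ 1) (hf : LipschitzWith K f) (r : S → S → ℝ) (γ : ℝ)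
    (wA wB : EuclideanSpace ℝ (Fin d)) :
    ‖tdExpected D P x r γ f wA - tdExpected D P x r γ f wB‖ ≤
      (1 + |γ|) * K * ∑ s, D s * |⟪x s, wA⟫ - ⟪x s, wB⟫| := by
  let δ (s : S) : ℝ := |⟪x s, wA⟫ - ⟪x s, wB⟫|
  have sample_le (s s' : S) :
      ‖tdSample x r γ f wA s s' - tdSample x r γ f wB s s'‖ ≤ K * (|γ| * δ s' + δ s) :=
    (norm_tdSample_sub_le hf r γ wA wB s s').trans (mul_le_of_le_one_right (by positivity) (hx s))
  calc ‖tdExpected D P x r γ f wA - tdExpected D P x r γ f wB‖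
    _ ≤ ∑ s, ∑ s', D s * P s s' * ‖tdSample x r γ f wA s s' - tdSample x r γ f wB s s'‖ :=
        norm_tdExpected_sub_le_sum_norm hD hP r γ f wA wB
    _ ≤ ∑ s, ∑ s', D s * P s s' * (K * (|γ| * δ s' + δ s)) := by
        gcongr with s _ s' _
        · exact mul_nonneg (hD s) (hP s s')
        · exact sample_le s s'
    _ = K * (|γ| * ∑ s, ∑ s', D s * P s s' * δ s' + ∑ s, ∑ s', D s * P s s' * δ s) := by
        simp only [mul_sum, ← sum_add_distrib]
        congr! 2
        ring
    _ = (1 + |γ|) * K * ∑ s, D s * δ s := by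
        rw [sum_sum_mul_snd_of_sum_eq hstat, sum_sum_mul_fst_of_sum_eq_one D hP1]
        ring

theorem td_expected_update_norm_general (hD : ∀ s, 0 ≤ D s) (hD1 : ∑ s, D s = 1)
    (hP : ∀ s s', 0 ≤ P s s') (hP1 : ∀ s, ∑ s', P s s' = 1)
    (hstat : ∀ s', ∑ s, D s * P s s' = D s') (hx : ∀ s, ‖x s‖ ≤ 1) (hf : LipschitzWith K f)
    (r : S → S → ℝ) (γ : ℝ) (wA wB : EuclideanSpace ℝ (Fin d)) :
    ‖tdExpected D P x r γ f wA - tdExpected D P x r γ f wB‖ ≤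
      (1 + |γ|) * K * √(∑ s, D s * (⟪x s, wA⟫ - ⟪x s, wB⟫) ^ 2) := by
  refine (norm_tdExpected_sub_le hD hP hP1 hstat hx hf r γ wA wB).trans ?_
  gcongr
  simpa only [sq_abs] using
    sum_mul_le_sqrt_sum_mul_sq univ D (fun s ↦ |⟪x s, wA⟫ - ⟪x s, wB⟫|) (fun s _ ↦ hD s) hD1

end TemporalDifference

/-- the expected TD update satisfies
`‖ḡ(w^A) − ḡ(w^B)‖₂ ≤ 2L √(Σ_s D(s)(z_{w^A}(s) − z_{w^B}(s))²)`. -/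
theorem td_expected_update_norm {S : Type*} [Fintype S] [Nonempty S] {d : ℕ}
    (D : S → ℝ) (P : S → S → ℝ) (x : S → EuclideanSpace ℝ (Fin d))
    (r : S → S → ℝ) (γ L : ℝ) (f : ℝ → ℝ)
    (hD : ∀ s, 0 ≤ D s) (hD1 : ∑ s, D s = 1)
    (hP : ∀ s s', 0 ≤ P s s') (hP1 : ∀ s, ∑ s', P s s' = 1)
    (hstat : ∀ s', ∑ s, D s * P s s' = D s')
    (hx : ∀ s, ‖x s‖ ≤ 1)
    (hγ0 : 0 ≤ γ) (hγ1 : γ < 1) (hL : 1 ≤ L)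
    (hf : StrictMono f)
    (hfLip : ∀ a b : ℝ, (1 / L) * |a - b| ≤ |f a - f b| ∧ |f a - f b| ≤ L * |a - b|)
    (wA wB : EuclideanSpace ℝ (Fin d)) :
    ‖tdExpected D P x r γ f wA - tdExpected D P x r γ f wB‖ ≤
      2 * L * Real.sqrt (∑ s, D s * (⟪x s, wA⟫ - ⟪x s, wB⟫) ^ 2) := by
  lift L to ℝ≥0 using zero_le_one.trans hL
  have lipschitz : LipschitzWith L f := .of_dist_le_mul fun a b ↦ (hfLip a b).2
  have discount_le : 1 + |γ| ≤ 2 := by rw [abs_of_nonneg hγ0]; linarith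
  refine (td_expected_update_norm_general hD hD1 hP hP1 hstat hx lipschitz r γ wA wB).trans ?_
  gcongr
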